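/- arXiv:1503.02862 — 4 statements merged into one kernel-verified Lean document; each statement's English description precedes it below -/
import Mathlib

section
/- Under the stated hypotheses on φ, the identity ∫₀^∞ s^{a+4}·φ(s)² ds = ((a+3)(5−a)/5)·∫₀^∞ s^{a+2}·φ(s)² ds holds. -/
/-!
Write `I = ∫ s^m φ²`, `J = ∫ s^m φ'²` and `K = ∫ s^(m-2) φ²` for a solution of
`φ'' + (a/s) φ' = c φ`. Integrating the derivatives of `s^m φ φ'` and `s^(m-1) φ²` gives the energy
identity `J + c I = (m - a)(m - 1)/2 · K`, and integrating that of `s^(m+1) (φ'² - c φ²)` gives the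
Pohozaev identity `(m + 1 - 2a) J = c (m + 1) I`. Eliminating `J` relates `I` to `K`; the theorem is
the case `m = a + 4`, `c = 1`. No boundary terms appear: if `F'` and `F(s)/s` are integrable on
`(0, ∞)`, then `F` tends to `0` at both ends.
-/

section MellinByParts

open MeasureTheory Set

variable {E : Type*} [NormedAddCommGroup E] [NormedSpace ℝ E]

theorem integral_comp_exp (g : ℝ → E) :
    ∫ t, Real.exp t • g (Real.exp t) = ∫ s in Ioi 0, g s := by
  simpa [image_univ, Real.range_exp] using (integral_image_eq_integral_abs_deriv_smul
    MeasurableSet.univ (fun t _ ↦ (Real.hasDerivAt_exp t).hasDerivWithinAt)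
    Real.exp_injective.injOn g).symm

theorem integrable_comp_exp_iff (g : ℝ → E) :
    Integrable (fun t ↦ Real.exp t • g (Real.exp t)) ↔ IntegrableOn g (Ioi 0) := by
  simpa [image_univ, Real.range_exp] using (integrableOn_image_iff_integrableOn_abs_deriv_smul
    MeasurableSet.univ (fun t _ ↦ (Real.hasDerivAt_exp t).hasDerivWithinAt)
    Real.exp_injective.injOn g).symm

theorem integral_Ioi_zero_eq_zero_of_hasDerivAt {F F' : ℝ → E}
    (hF : ∀ s, 0 < s → HasDerivAt F (F' s) s) (hF' : IntegrableOn F' (Ioi 0))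
    (hF_inv : IntegrableOn (fun s ↦ s⁻¹ • F s) (Ioi 0)) :
    ∫ s in Ioi 0, F' s = 0 := by
  rw [← integral_comp_exp]
  refine integral_eq_zero_of_hasDerivAt_of_integrable (f := fun t ↦ F (Real.exp t))
    (fun t ↦ (hF _ (Real.exp_pos t)).scomp t (Real.hasDerivAt_exp t))
    ((integrable_comp_exp_iff F').2 hF') ?_
  simpa [smul_smul, Real.exp_ne_zero] using (integrable_comp_exp_iff _).2 hF_inv

theorem integral_Ioi_zero_rpow_smul_deriv {k : ℝ} {f f' : ℝ → E}
    (hf : ∀ s, 0 < s → HasDerivAt f (f' s) s)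
    (hf_int : IntegrableOn (fun s ↦ s ^ (k - 1) • f s) (Ioi 0))
    (hf'_int : IntegrableOn (fun s ↦ s ^ k • f' s) (Ioi 0)) :
    ∫ s in Ioi 0, s ^ k • f' s = -k • ∫ s in Ioi 0, s ^ (k - 1) • f s := by
  have hderiv (s : ℝ) (hs : 0 < s) : HasDerivAt (fun s ↦ s ^ k • f s)
      (s ^ k • f' s + k • s ^ (k - 1) • f s) s := by
    simpa only [smul_smul] using (Real.hasDerivAt_rpow_const (Or.inl hs.ne')).fun_smul (hf s hs)
  have hinv : IntegrableOn (fun s ↦ s⁻¹ • s ^ k • f s) (Ioi 0) := by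
    refine hf_int.congr_fun (fun s (hs : 0 < s) ↦ ?_) measurableSet_Ioi
    simp only [smul_smul, Real.rpow_sub_one hs.ne', div_eq_inv_mul]
  have hf_int_smul : IntegrableOn (fun s ↦ k • s ^ (k - 1) • f s) (Ioi 0) := hf_int.smul k
  have hzero := integral_Ioi_zero_eq_zero_of_hasDerivAt hderiv (hf'_int.add hf_int_smul) hinv
  rw [integral_add hf'_int hf_int_smul, integral_smul] at hzero
  rw [neg_smul, eq_neg_of_add_eq_zero_left hzero]

end MellinByParts

section WeightedIntegrability

open Asymptotics Filter MeasureTheory Set Topology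

theorem integrableOn_rpow_mul_mul_of_sq {m : ℝ} {u v : ℝ → ℝ}
    (hu : ContinuousOn u (Ioi 0)) (hv : ContinuousOn v (Ioi 0))
    (hu_int : IntegrableOn (fun s ↦ s ^ (m - 2) * u s ^ 2) (Ioi 0))
    (hv_int : IntegrableOn (fun s ↦ s ^ m * v s ^ 2) (Ioi 0)) :
    IntegrableOn (fun s ↦ s ^ (m - 1) * (u s * v s)) (Ioi 0) := by
  have hmeas : ContinuousOn (fun s : ℝ ↦ s ^ (m - 1) * (u s * v s)) (Ioi 0) :=
    (continuousOn_id.rpow_const fun s hs ↦ Or.inl (ne_of_gt hs)).mul (hu.mul hv)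
  refine (hu_int.add hv_int).mono' (hmeas.aestronglyMeasurable measurableSet_Ioi) ?_
  filter_upwards [ae_restrict_mem measurableSet_Ioi] with s (hs : 0 < s)
  have hpow_one : s ^ (m - 1) = s ^ (m - 2) * s := by
    rw [← Real.rpow_add_one hs.ne']; ring_nf
  have hpow_two : s ^ m = s ^ (m - 2) * s ^ 2 := by
    rw [← Real.rpow_add_natCast hs.ne']; norm_num
  calc ‖s ^ (m - 1) * (u s * v s)‖ = s ^ (m - 2) * (|u s| * (s * |v s|)) := by
        rw [hpow_one, Real.norm_eq_abs, abs_mul, abs_mul, abs_mul, abs_of_pos hs,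
          abs_of_pos (Real.rpow_pos_of_pos hs _)]
        ring
    _ ≤ s ^ (m - 2) * (|u s| ^ 2 + (s * |v s|) ^ 2) := by
        gcongr
        nlinarith [sq_nonneg (|u s| - s * |v s|), sq_nonneg (|u s| + s * |v s|)]
    _ = s ^ (m - 2) * u s ^ 2 + s ^ m * v s ^ 2 := by
        rw [mul_pow, sq_abs, sq_abs, hpow_two]
        ring

theorem integrableOn_rpow_mul_sq_of_isBigO {m p q : ℝ} {f : ℝ → ℝ} (hf : ContinuousOn f (Ioi 0))
    (hf_zero : f =O[𝓝[>] 0] (· ^ (-p))) (hf_top : f =O[atTop] (· ^ (-q)))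
    (hp : 2 * p < m + 1) (hq : m + 1 < 2 * q) :
    IntegrableOn (fun s ↦ s ^ m * f s ^ 2) (Ioi 0) := by
  have hsq {r s : ℝ} (hs : 0 < s) : (s ^ (-r)) ^ 2 = s ^ (-(2 * r)) := by
    rw [← Real.rpow_mul_natCast hs.le]; ring_nf
  have hzero : (fun s ↦ f s ^ 2) =O[𝓝[>] 0] (· ^ (-(2 * p))) :=
    (hf_zero.pow 2).congr' .rfl (eventually_mem_nhdsWithin.mono fun _ hs ↦ hsq hs)
  have htop : (fun s ↦ f s ^ 2) =O[atTop] (· ^ (-(2 * q))) :=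
    (hf_top.pow 2).congr' .rfl ((eventually_gt_atTop 0).mono fun _ hs ↦ hsq hs)
  simpa only [add_sub_cancel_right, Pi.pow_apply] using mellin_convergent_of_isBigO_scalar
    ((hf.pow 2).locallyIntegrableOn measurableSet_Ioi) htop hq hzero hp

theorem isBigO_nhdsGT_zero_rpow_neg_of_bounded {p : ℝ} {f : ℝ → ℝ}
    (hf : ∃ C, ∀ s ∈ Ioc (0 : ℝ) 1, |s ^ p * f s| ≤ C) : f =O[𝓝[>] 0] (· ^ (-p)) := by
  obtain ⟨C, hC⟩ := hf
  refine .of_bound C ?_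
  filter_upwards [Ioc_mem_nhdsGT one_pos] with s hs
  have hpow : 0 < s ^ p := Real.rpow_pos_of_pos hs.1 p
  have hle := hC s hs
  rw [abs_mul, abs_of_pos hpow] at hle
  rw [Real.rpow_neg hs.1.le, norm_inv, Real.norm_eq_abs, Real.norm_eq_abs, abs_of_pos hpow,
    ← div_eq_mul_inv, le_div_iff₀' hpow]
  exact hle

theorem isBigO_atTop_rpow_of_le_exp {s₀ C δ : ℝ} {f : ℝ → ℝ} (hδ : 0 < δ)
    (hf : ∀ s, s₀ ≤ s → |f s| ≤ C * Real.exp (-δ * s)) (r : ℝ) : f =O[atTop] (· ^ r) := by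
  have hexp : f =O[atTop] fun s ↦ Real.exp (-δ * s) :=
    .of_bound C <| (eventually_ge_atTop s₀).mono fun s hs ↦ by
      simpa only [Real.norm_eq_abs, Real.abs_exp] using hf s hs
  exact hexp.trans (isLittleO_exp_neg_mul_rpow_atTop hδ r).isBigO

end WeightedIntegrability

/-- `φ` solves `φ'' + (a / s) φ' = c φ` on `(0, ∞)`, and `φ'` is its derivative there. For
`a = n - 1` this is the equation `Δu = c u` on `ℝⁿ` for the radial function `u(x) = φ(|x|)`; stating
it through `HasDerivAt` puts no condition on the values of `φ` and `φ'` outside `(0, ∞)`. -/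
structure IsRadialHelmholtzSolution (a c : ℝ) (φ φ' : ℝ → ℝ) : Prop where
  hasDerivAt : ∀ s, 0 < s → HasDerivAt φ (φ' s) s
  hasDerivAt_deriv : ∀ s, 0 < s → HasDerivAt φ' (c * φ s - a / s * φ' s) s

namespace IsRadialHelmholtzSolution

open MeasureTheory Set

variable {a c m : ℝ} {φ φ' : ℝ → ℝ}

theorem of_contDiffOn (hφ : ContDiffOn ℝ 2 φ (Ioi 0))
    (hode : ∀ s, 0 < s → deriv (deriv φ) s + a / s * deriv φ s - c * φ s = 0) :
    IsRadialHelmholtzSolution a c φ (deriv φ) where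
  hasDerivAt s hs :=
    ((hφ.differentiableOn two_ne_zero).differentiableAt (Ioi_mem_nhds hs)).hasDerivAt
  hasDerivAt_deriv s hs := by
    have hderiv : ContDiffOn ℝ 1 (deriv φ) (Ioi 0) :=
      hφ.deriv_of_isOpen isOpen_Ioi one_add_one_eq_two.le
    rw [show c * φ s - a / s * deriv φ s = deriv (deriv φ) s by linarith [hode s hs]]
    exact ((hderiv.differentiableOn one_ne_zero).differentiableAt (Ioi_mem_nhds hs)).hasDerivAt

theorem continuousOn (h : IsRadialHelmholtzSolution a c φ φ') : ContinuousOn φ (Ioi 0) :=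
  fun s hs ↦ (h.hasDerivAt s hs).continuousAt.continuousWithinAt

theorem continuousOn_deriv (h : IsRadialHelmholtzSolution a c φ φ') : ContinuousOn φ' (Ioi 0) :=
  fun s hs ↦ (h.hasDerivAt_deriv s hs).continuousAt.continuousWithinAt

theorem hasDerivAt_sq (h : IsRadialHelmholtzSolution a c φ φ') (s : ℝ) (hs : 0 < s) :
    HasDerivAt (fun s ↦ φ s ^ 2) (2 * (φ s * φ' s)) s := by
  simpa [mul_assoc] using (h.hasDerivAt s hs).fun_pow 2

theorem hasDerivAt_mul_deriv (h : IsRadialHelmholtzSolution a c φ φ') (s : ℝ) (hs : 0 < s) :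
    HasDerivAt (fun s ↦ φ s * φ' s) (φ' s ^ 2 + c * φ s ^ 2 - a / s * (φ s * φ' s)) s :=
  ((h.hasDerivAt s hs).mul (h.hasDerivAt_deriv s hs)).congr_deriv (by ring)

theorem hasDerivAt_deriv_sq_sub_sq (h : IsRadialHelmholtzSolution a c φ φ') (s : ℝ) (hs : 0 < s) :
    HasDerivAt (fun s ↦ φ' s ^ 2 - c * φ s ^ 2) (-(2 * a / s) * φ' s ^ 2) s :=
  (((h.hasDerivAt_deriv s hs).pow 2).sub ((h.hasDerivAt_sq s hs).const_mul c)).congr_deriv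
    (by push_cast; ring)

theorem integrableOn_rpow_mul_mul_deriv (h : IsRadialHelmholtzSolution a c φ φ')
    (hφ'_int : IntegrableOn (fun s ↦ s ^ m * φ' s ^ 2) (Ioi 0))
    (hφ_int : IntegrableOn (fun s ↦ s ^ (m - 2) * φ s ^ 2) (Ioi 0)) :
    IntegrableOn (fun s ↦ s ^ (m - 1) * (φ s * φ' s)) (Ioi 0) :=
  integrableOn_rpow_mul_mul_of_sq h.continuousOn h.continuousOn_deriv hφ_int hφ'_int

theorem integral_rpow_mul_mul_deriv (h : IsRadialHelmholtzSolution a c φ φ')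
    (hφ'_int : IntegrableOn (fun s ↦ s ^ m * φ' s ^ 2) (Ioi 0))
    (hφ_int : IntegrableOn (fun s ↦ s ^ (m - 2) * φ s ^ 2) (Ioi 0)) :
    2 * ∫ s in Ioi 0, s ^ (m - 1) * (φ s * φ' s) =
      -(m - 1) * ∫ s in Ioi 0, s ^ (m - 2) * φ s ^ 2 := by
  have hcross : IntegrableOn (fun s ↦ 2 * (s ^ (m - 1) * (φ s * φ' s))) (Ioi 0) :=
    (h.integrableOn_rpow_mul_mul_deriv hφ'_int hφ_int).const_mul 2
  have hexp : m - 1 - 1 = m - 2 := by ring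
  have hparts := integral_Ioi_zero_rpow_smul_deriv (k := m - 1) h.hasDerivAt_sq
    (by simpa only [hexp, smul_eq_mul] using hφ_int)
    (by simpa only [smul_eq_mul, mul_left_comm _ (2 : ℝ)] using hcross)
  simpa only [hexp, smul_eq_mul, mul_left_comm _ (2 : ℝ), integral_const_mul] using hparts

theorem energy_identity (h : IsRadialHelmholtzSolution a c φ φ')
    (hφ_int : IntegrableOn (fun s ↦ s ^ m * φ s ^ 2) (Ioi 0))
    (hφ'_int : IntegrableOn (fun s ↦ s ^ m * φ' s ^ 2) (Ioi 0))
    (hφ_int' : IntegrableOn (fun s ↦ s ^ (m - 2) * φ s ^ 2) (Ioi 0)) :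
    (∫ s in Ioi 0, s ^ m * φ' s ^ 2) + c * ∫ s in Ioi 0, s ^ m * φ s ^ 2 =
      (m - a) * (m - 1) / 2 * ∫ s in Ioi 0, s ^ (m - 2) * φ s ^ 2 := by
  have hcross := h.integrableOn_rpow_mul_mul_deriv hφ'_int hφ_int'
  have hexpand : EqOn
      (fun s ↦ s ^ m * φ' s ^ 2 + c * (s ^ m * φ s ^ 2) - a * (s ^ (m - 1) * (φ s * φ' s)))
      (fun s ↦ s ^ m • (φ' s ^ 2 + c * φ s ^ 2 - a / s * (φ s * φ' s))) (Ioi 0) := by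
    intro s (hs : 0 < s)
    simp only [Real.rpow_sub_one hs.ne', smul_eq_mul]
    ring
  have hsum : IntegrableOn (fun s ↦ s ^ m * φ' s ^ 2 + c * (s ^ m * φ s ^ 2)) (Ioi 0) :=
    hφ'_int.add (hφ_int.const_mul c)
  have hparts := integral_Ioi_zero_rpow_smul_deriv (k := m) h.hasDerivAt_mul_deriv hcross
    ((hsum.sub (hcross.const_mul a)).congr_fun hexpand measurableSet_Ioi)
  rw [← setIntegral_congr_fun measurableSet_Ioi hexpand,
    integral_sub hsum (hcross.const_mul a), integral_add hφ'_int (hφ_int.const_mul c),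
    integral_const_mul, integral_const_mul] at hparts
  simp only [smul_eq_mul] at hparts
  linear_combination hparts + (a - m) / 2 * h.integral_rpow_mul_mul_deriv hφ'_int hφ_int'

theorem pohozaev_identity (h : IsRadialHelmholtzSolution a c φ φ')
    (hφ_int : IntegrableOn (fun s ↦ s ^ m * φ s ^ 2) (Ioi 0))
    (hφ'_int : IntegrableOn (fun s ↦ s ^ m * φ' s ^ 2) (Ioi 0)) :
    (m + 1 - 2 * a) * ∫ s in Ioi 0, s ^ m * φ' s ^ 2 =
      c * (m + 1) * ∫ s in Ioi 0, s ^ m * φ s ^ 2 := by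
  have hexp : m + 1 - 1 = m := add_sub_cancel_right m 1
  have hexpand : EqOn (fun s ↦ s ^ m * φ' s ^ 2 - c * (s ^ m * φ s ^ 2))
      (fun s ↦ s ^ (m + 1 - 1) • (φ' s ^ 2 - c * φ s ^ 2)) (Ioi 0) := by
    intro s _
    simp only [hexp, smul_eq_mul]
    ring
  have hexpand' : EqOn (fun s ↦ -(2 * a) * (s ^ m * φ' s ^ 2))
      (fun s ↦ s ^ (m + 1) • (-(2 * a / s) * φ' s ^ 2)) (Ioi 0) := by
    intro s (hs : 0 < s)
    simp only [Real.rpow_add_one hs.ne', smul_eq_mul]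
    field_simp
  have hparts := integral_Ioi_zero_rpow_smul_deriv (k := m + 1) h.hasDerivAt_deriv_sq_sub_sq
    ((hφ'_int.sub (hφ_int.const_mul c)).congr_fun hexpand measurableSet_Ioi)
    (IntegrableOn.congr_fun (hφ'_int.const_mul _) hexpand' measurableSet_Ioi)
  rw [← setIntegral_congr_fun measurableSet_Ioi hexpand,
    ← setIntegral_congr_fun measurableSet_Ioi hexpand', integral_const_mul,
    integral_sub hφ'_int (hφ_int.const_mul c), integral_const_mul] at hparts
  simp only [smul_eq_mul] at hparts
  linear_combination hparts

theorem moment_recursion (h : IsRadialHelmholtzSolution a c φ φ')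
    (hφ_int : IntegrableOn (fun s ↦ s ^ m * φ s ^ 2) (Ioi 0))
    (hφ'_int : IntegrableOn (fun s ↦ s ^ m * φ' s ^ 2) (Ioi 0))
    (hφ_int' : IntegrableOn (fun s ↦ s ^ (m - 2) * φ s ^ 2) (Ioi 0)) :
    4 * c * (m + 1 - a) * ∫ s in Ioi 0, s ^ m * φ s ^ 2 =
      (m + 1 - 2 * a) * (m - a) * (m - 1) * ∫ s in Ioi 0, s ^ (m - 2) * φ s ^ 2 := by
  linear_combination 2 * (m + 1 - 2 * a) * h.energy_identity hφ_int hφ'_int hφ_int' -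
    2 * h.pohozaev_identity hφ_int hφ'_int

end IsRadialHelmholtzSolution

open Asymptotics Filter MeasureTheory Set Topology in
theorem stmt_4_general {a p p' q : ℝ} {φ φ' : ℝ → ℝ} (h : IsRadialHelmholtzSolution a 1 φ φ')
    (hφ_zero : φ =O[𝓝[>] 0] (· ^ (-p))) (hφ'_zero : φ' =O[𝓝[>] 0] (· ^ (-p')))
    (hφ_top : φ =O[atTop] (· ^ (-q))) (hφ'_top : φ' =O[atTop] (· ^ (-q)))
    (hp : 2 * p < a + 3) (hp' : 2 * p' < a + 5) (hq : a + 5 < 2 * q) :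
    ∫ s in Ioi 0, s ^ (a + 4) * φ s ^ 2 =
      (a + 3) * (5 - a) / 5 * ∫ s in Ioi 0, s ^ (a + 2) * φ s ^ 2 := by
  have hφ_int {m : ℝ} (hm : a + 2 ≤ m) (hm' : m ≤ a + 4) :
      IntegrableOn (fun s ↦ s ^ m * φ s ^ 2) (Ioi 0) :=
    integrableOn_rpow_mul_sq_of_isBigO h.continuousOn hφ_zero hφ_top (by linarith) (by linarith)
  have hφ'_int : IntegrableOn (fun s ↦ s ^ (a + 4) * φ' s ^ 2) (Ioi 0) :=
    integrableOn_rpow_mul_sq_of_isBigO h.continuousOn_deriv hφ'_zero hφ'_top (by linarith)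
      (by linarith)
  have hrec := h.moment_recursion (hφ_int (by linarith) le_rfl) hφ'_int
    (hφ_int (by linarith) (by linarith))
  rw [show a + 4 - 2 = a + 2 by ring] at hrec
  linear_combination hrec / 20

open MeasureTheory Real in
theorem stmt_4 (γ a : ℝ) (hγ : γ ∈ Set.Ioo (0:ℝ) 1) (ha : a = 1 - 2*γ)
    (φ : ℝ → ℝ) (hφ : ContDiffOn ℝ 2 φ (Set.Ioi 0))
    (hode : ∀ s : ℝ, 0 < s → deriv (deriv φ) s + (a / s) * deriv φ s - φ s = 0)
    (hbdd : ∃ C : ℝ, ∀ s ∈ Set.Ioc (0:ℝ) 1, |φ s| ≤ C)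
    (hbdd' : ∃ C : ℝ, ∀ s ∈ Set.Ioc (0:ℝ) 1, |s ^ a * deriv φ s| ≤ C)
    (hdecay : ∃ C δ : ℝ, 0 < C ∧ 0 < δ ∧
      ∀ s : ℝ, 1 ≤ s → |φ s| + |deriv φ s| ≤ C * Real.exp (-δ * s)) :
    ∫ s in Set.Ioi (0:ℝ), s ^ (a+4) * (φ s)^2 =
      ((a+3)*(5-a)/5) * ∫ s in Set.Ioi (0:ℝ), s ^ (a+2) * (φ s)^2 := by
  obtain ⟨hγ_pos, hγ_lt_one⟩ := hγ
  obtain ⟨C, δ, -, hδ, hexp⟩ := hdecay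
  exact stmt_4_general (p := 0) (p' := a) (q := 3) (.of_contDiffOn hφ (by simpa using hode))
    (isBigO_nhdsGT_zero_rpow_neg_of_bounded (by simpa using hbdd))
    (isBigO_nhdsGT_zero_rpow_neg_of_bounded hbdd')
    (isBigO_atTop_rpow_of_le_exp (C := C) hδ
      (fun s hs ↦ by linarith [hexp s hs, abs_nonneg (deriv φ s)]) _)
    (isBigO_atTop_rpow_of_le_exp (C := C) hδ
      (fun s hs ↦ by linarith [hexp s hs, abs_nonneg (φ s)]) _)
    (by linarith) (by linarith) (by linarith)
end

section
/- Under the stated hypotheses on φ, if additionally n is an integer with n > 4 + 2γ, then ∫₀^∞ s^{n−4+a}·φ(s)² ds = ((n−4)(n−5+a)(n−3−a)/(4(n−3)))·∫₀^∞ s^{n−6+a}·φ(s)² ds. -/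
/-!
Integrating the derivatives of `s ^ (m - 1) * φ ^ 2`, `s ^ m * (φ * φ')` and
`s ^ (m + 1) * (φ ^ 2 - φ' ^ 2)` over `(0, ∞)`, the last one being a Pohozaev identity, gives three
linear relations between the four moments `∫ s ^ m * φ ^ 2`, `∫ s ^ m * φ' ^ 2`,
`∫ s ^ (m - 1) * (φ * φ')` and `∫ s ^ (m - 2) * φ ^ 2`. Eliminating the second and the third moment
leaves the asserted recurrence, with `m = n - 4 + a`.
-/

section

open Set Filter Topology Asymptotics MeasureTheory

/-- The growth condition `f s = O(s ^ (-p))` as `s → 0⁺` and `f s = O(s ^ (-q))` as `s → ∞`, under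
which the Mellin transform of `f` converges on the strip between `p` and `q`. -/
structure HasPowerBounds (f : ℝ → ℝ) (p q : ℝ) : Prop where
  zero : f =O[𝓝[>] 0] fun s ↦ s ^ (-p)
  top : f =O[atTop] fun s ↦ s ^ (-q)

/-- The equation `φ'' + (a / s) φ' = φ` on `(0, ∞)`, written as a first-order system for `φ` and
its derivative `φ'`. For `a = 1 - 2γ` it is solved by `s ^ γ * K_γ s`, where `K_γ` is the modified
Bessel function of the second kind. -/
structure IsBesselSolution (a : ℝ) (φ φ' : ℝ → ℝ) : Prop where
  hasDerivAt : ∀ s, 0 < s → HasDerivAt φ (φ' s) s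
  hasDerivAt_deriv : ∀ s, 0 < s → HasDerivAt φ' (φ s - a / s * φ' s) s

lemma isBigO_mul_of_isBigO_rpow {l : Filter ℝ} (hl : ∀ᶠ s in l, 0 < s) {f g : ℝ → ℝ} {p q : ℝ}
    (hf : f =O[l] fun s ↦ s ^ p) (hg : g =O[l] fun s ↦ s ^ q) :
    (fun s ↦ f s * g s) =O[l] fun s ↦ s ^ (p + q) :=
  (hf.mul hg).congr' .rfl (hl.mono fun _ hs ↦ (Real.rpow_add hs p q).symm)

namespace HasPowerBounds

variable {f g : ℝ → ℝ} {k p q p' q' : ℝ}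

lemma mul (hf : HasPowerBounds f p q) (hg : HasPowerBounds g p' q') :
    HasPowerBounds (fun s ↦ f s * g s) (p + p') (q + q') where
  zero := by
    simp only [neg_add]
    exact isBigO_mul_of_isBigO_rpow self_mem_nhdsWithin hf.zero hg.zero
  top := by
    simp only [neg_add]
    exact isBigO_mul_of_isBigO_rpow (eventually_gt_atTop 0) hf.top hg.top

lemma sq (hf : HasPowerBounds f p q) : HasPowerBounds (fun s ↦ f s ^ 2) (2 * p) (2 * q) := by
  simpa only [pow_two, two_mul] using hf.mul hf

lemma sub (hf : HasPowerBounds f p q) (hg : HasPowerBounds g p q) :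
    HasPowerBounds (fun s ↦ f s - g s) p q :=
  ⟨hf.zero.sub hg.zero, hf.top.sub hg.top⟩

lemma mono_left (hf : HasPowerBounds f p q) (hp : p ≤ p') : HasPowerBounds f p' q where
  zero := by
    refine hf.zero.trans (.of_bound' ?_)
    filter_upwards [Ioc_mem_nhdsGT one_pos] with s hs
    rw [Real.norm_of_nonneg (Real.rpow_nonneg hs.1.le _),
      Real.norm_of_nonneg (Real.rpow_nonneg hs.1.le _)]
    exact Real.rpow_le_rpow_of_exponent_ge hs.1 hs.2 (neg_le_neg hp)
  top := hf.top

lemma of_bounded_of_exp_decay {C D δ : ℝ} (hδ : 0 < δ)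
    (h_zero : ∀ s ∈ Ioc (0 : ℝ) 1, |s ^ p * f s| ≤ C)
    (h_top : ∀ s, 1 ≤ s → |f s| ≤ D * Real.exp (-δ * s)) (q : ℝ) : HasPowerBounds f p q where
  zero := by
    refine .of_bound C ?_
    filter_upwards [Ioc_mem_nhdsGT one_pos] with s hs
    have hf : f s = s ^ p * f s * s ^ (-p) := by
      rw [mul_right_comm, ← Real.rpow_add hs.1, add_neg_cancel, Real.rpow_zero, one_mul]
    rw [hf, norm_mul]
    exact mul_le_mul_of_nonneg_right (h_zero s hs) (norm_nonneg _)
  top := by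
    refine IsBigO.trans (.of_bound D ?_) (isLittleO_exp_neg_mul_rpow_atTop hδ (-q)).isBigO
    filter_upwards [eventually_ge_atTop 1] with s hs
    rw [Real.norm_of_nonneg (Real.exp_pos _).le]
    exact h_top s hs

lemma integrableOn_rpow_mul (hf : HasPowerBounds f p q) (hc : ContinuousOn f (Ioi 0))
    (hp : p < k + 1) (hq : k + 1 < q) : IntegrableOn (fun s ↦ s ^ k * f s) (Ioi 0) := by
  simpa only [add_sub_cancel_right] using mellin_convergent_of_isBigO_scalar
    (hc.locallyIntegrableOn measurableSet_Ioi) hf.top hq hf.zero hp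

lemma tendsto_rpow_mul_nhdsGT_zero (hf : HasPowerBounds f p q) (hp : p < k) :
    Tendsto (fun s ↦ s ^ k * f s) (𝓝[>] 0) (𝓝 0) := by
  refine (isBigO_mul_of_isBigO_rpow self_mem_nhdsWithin (isBigO_refl _ _) hf.zero).trans_tendsto ?_
  have h_pos : 0 < k + -p := by linarith
  simpa only [Real.zero_rpow h_pos.ne'] using
    (Real.continuousAt_rpow_const 0 _ (.inr h_pos.le)).tendsto.mono_left nhdsWithin_le_nhds

lemma tendsto_rpow_mul_atTop (hf : HasPowerBounds f p q) (hq : k < q) :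
    Tendsto (fun s ↦ s ^ k * f s) atTop (𝓝 0) := by
  refine (isBigO_mul_of_isBigO_rpow (eventually_gt_atTop 0) (isBigO_refl _ _)
    hf.top).trans_tendsto ?_
  simpa only [neg_sub, sub_eq_add_neg k] using tendsto_rpow_neg_atTop (sub_pos.2 hq)

lemma integral_rpow_mul_deriv {f' : ℝ → ℝ} (hf : HasPowerBounds f p q)
    (hderiv : ∀ s, 0 < s → HasDerivAt f (f' s) s)
    (hint : IntegrableOn (fun s ↦ s ^ k * f' s) (Ioi 0)) (hp : p < k) (hq : k < q) :
    ∫ s in Ioi 0, s ^ k * f' s = -(k * ∫ s in Ioi 0, s ^ (k - 1) * f s) := by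
  have hint_left : IntegrableOn (fun s ↦ s ^ (k - 1) * f s) (Ioi 0) :=
    hf.integrableOn_rpow_mul (fun s hs ↦ (hderiv s hs).continuousAt.continuousWithinAt)
      (by linarith) (by linarith)
  have hparts := integral_Ioi_mul_deriv_eq_deriv_mul
    (fun s hs ↦ Real.hasDerivAt_rpow_const (.inl (ne_of_gt hs))) hderiv hint
    (by simpa only [Pi.mul_def, mul_assoc, IntegrableOn] using hint_left.const_mul k)
    (hf.tendsto_rpow_mul_nhdsGT_zero hp) (hf.tendsto_rpow_mul_atTop hq)
  simpa only [sub_zero, zero_sub, mul_assoc, integral_const_mul] using hparts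

end HasPowerBounds

namespace IsBesselSolution

variable {a m α β : ℝ} {φ φ' : ℝ → ℝ}

lemma of_contDiffOn (hφ : ContDiffOn ℝ 2 φ (Ioi 0))
    (hode : ∀ s, 0 < s → deriv (deriv φ) s + a / s * deriv φ s - φ s = 0) :
    IsBesselSolution a φ (deriv φ) where
  hasDerivAt s hs :=
    ((hφ.differentiableOn two_ne_zero).differentiableAt (Ioi_mem_nhds hs)).hasDerivAt
  hasDerivAt_deriv s hs := by
    have hφ' : ContDiffOn ℝ 1 (deriv φ) (Ioi 0) :=
      hφ.deriv_of_isOpen isOpen_Ioi one_add_one_eq_two.le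
    have hderiv :=
      ((hφ'.differentiableOn one_ne_zero).differentiableAt (Ioi_mem_nhds hs)).hasDerivAt
    exact hderiv.congr_deriv (by linear_combination hode s hs)

lemma continuousOn (h : IsBesselSolution a φ φ') : ContinuousOn φ (Ioi 0) :=
  fun s hs ↦ (h.hasDerivAt s hs).continuousAt.continuousWithinAt

lemma continuousOn_deriv (h : IsBesselSolution a φ φ') : ContinuousOn φ' (Ioi 0) :=
  fun s hs ↦ (h.hasDerivAt_deriv s hs).continuousAt.continuousWithinAt

lemma hasDerivAt_sq (h : IsBesselSolution a φ φ') {s : ℝ} (hs : 0 < s) :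
    HasDerivAt (fun s ↦ φ s ^ 2) (2 * (φ s * φ' s)) s :=
  ((h.hasDerivAt s hs).fun_pow 2).congr_deriv (by norm_num; ring)

lemma hasDerivAt_mul_deriv (h : IsBesselSolution a φ φ') {s : ℝ} (hs : 0 < s) :
    HasDerivAt (fun s ↦ φ s * φ' s) (φ s ^ 2 + φ' s ^ 2 - a / s * (φ s * φ' s)) s :=
  ((h.hasDerivAt s hs).fun_mul (h.hasDerivAt_deriv s hs)).congr_deriv (by ring)

lemma hasDerivAt_sq_sub_deriv_sq (h : IsBesselSolution a φ φ') {s : ℝ} (hs : 0 < s) :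
    HasDerivAt (fun s ↦ φ s ^ 2 - φ' s ^ 2) (2 * a / s * φ' s ^ 2) s :=
  ((h.hasDerivAt_sq hs).fun_sub ((h.hasDerivAt_deriv s hs).fun_pow 2)).congr_deriv
    (by norm_num; ring)

lemma integrableOn_rpow_mul_sq (h : IsBesselSolution a φ φ') (hφ : HasPowerBounds φ α β)
    (hα : 2 * α < m + 1) (hβ : m + 1 < 2 * β) :
    IntegrableOn (fun s ↦ s ^ m * φ s ^ 2) (Ioi 0) :=
  hφ.sq.integrableOn_rpow_mul (h.continuousOn.pow 2) hα hβ

lemma integrableOn_rpow_mul_deriv_sq (h : IsBesselSolution a φ φ')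
    (hφ' : HasPowerBounds φ' (α + 1) β) (hα : 2 * α + 1 < m) (hβ : m + 1 < 2 * β) :
    IntegrableOn (fun s ↦ s ^ m * φ' s ^ 2) (Ioi 0) :=
  hφ'.sq.integrableOn_rpow_mul (h.continuousOn_deriv.pow 2) (by linarith) hβ

lemma integrableOn_rpow_mul_mul_deriv (h : IsBesselSolution a φ φ') (hφ : HasPowerBounds φ α β)
    (hφ' : HasPowerBounds φ' (α + 1) β) (hα : 2 * α < m) (hβ : m + 1 < 2 * β) :
    IntegrableOn (fun s ↦ s ^ m * (φ s * φ' s)) (Ioi 0) :=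
  (hφ.mul hφ').integrableOn_rpow_mul (h.continuousOn.mul h.continuousOn_deriv)
    (by linarith) (by linarith)

lemma integral_rpow_mul_mul_deriv (h : IsBesselSolution a φ φ') (hφ : HasPowerBounds φ α β)
    (hφ' : HasPowerBounds φ' (α + 1) β) (hα : 2 * α < m) (hβ : m + 1 < 2 * β) :
    2 * ∫ s in Ioi 0, s ^ m * (φ s * φ' s) = -(m * ∫ s in Ioi 0, s ^ (m - 1) * φ s ^ 2) := by
  have hexpand (s : ℝ) : s ^ m * (2 * (φ s * φ' s)) = 2 * (s ^ m * (φ s * φ' s)) :=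
    mul_left_comm ..
  have hint : IntegrableOn (fun s ↦ s ^ m * (2 * (φ s * φ' s))) (Ioi 0) := by
    simp only [hexpand]
    exact (h.integrableOn_rpow_mul_mul_deriv hφ hφ' hα hβ).const_mul 2
  have hparts := hφ.sq.integral_rpow_mul_deriv (fun _ ↦ h.hasDerivAt_sq) hint hα (by linarith)
  simpa only [hexpand, integral_const_mul] using hparts

lemma integral_rpow_mul_sq_add_integral_rpow_mul_deriv_sq (h : IsBesselSolution a φ φ')
    (hφ : HasPowerBounds φ α β) (hφ' : HasPowerBounds φ' (α + 1) β) (hα : 2 * α + 1 < m)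
    (hβ : m + 1 < 2 * β) :
    (∫ s in Ioi 0, s ^ m * φ s ^ 2) + ∫ s in Ioi 0, s ^ m * φ' s ^ 2 =
      (a - m) * ∫ s in Ioi 0, s ^ (m - 1) * (φ s * φ' s) := by
  have hint_sq := h.integrableOn_rpow_mul_sq (m := m) hφ (by linarith) hβ
  have hint_deriv := h.integrableOn_rpow_mul_deriv_sq hφ' hα hβ
  have hint_add := hint_sq.fun_add hint_deriv
  have hint_mul := (h.integrableOn_rpow_mul_mul_deriv (m := m - 1) hφ hφ'
    (by linarith) (by linarith)).const_mul a
  have hexpand : EqOn (fun s ↦ s ^ m * (φ s ^ 2 + φ' s ^ 2 - a / s * (φ s * φ' s)))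
      (fun s ↦ s ^ m * φ s ^ 2 + s ^ m * φ' s ^ 2 - a * (s ^ (m - 1) * (φ s * φ' s)))
      (Ioi 0) := fun s hs ↦ by
    simp only [Real.rpow_sub_one (ne_of_gt hs)]
    ring
  have hparts := (hφ.mul hφ').integral_rpow_mul_deriv (fun _ ↦ h.hasDerivAt_mul_deriv)
    (IntegrableOn.congr_fun (hint_add.sub hint_mul) hexpand.symm measurableSet_Ioi)
    (by linarith) (by linarith)
  rw [setIntegral_congr_fun measurableSet_Ioi hexpand, integral_sub hint_add hint_mul,
    integral_add hint_sq hint_deriv, integral_const_mul] at hparts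
  linear_combination hparts

lemma pohozaev_identity (h : IsBesselSolution a φ φ') (hφ : HasPowerBounds φ α β)
    (hφ' : HasPowerBounds φ' (α + 1) β) (hα : 2 * α + 1 < m) (hβ : m + 1 < 2 * β) :
    (m + 1) * ∫ s in Ioi 0, s ^ m * φ s ^ 2 =
      (m + 1 - 2 * a) * ∫ s in Ioi 0, s ^ m * φ' s ^ 2 := by
  have hint_sq := h.integrableOn_rpow_mul_sq (m := m) hφ (by linarith) hβ
  have hint_deriv := h.integrableOn_rpow_mul_deriv_sq hφ' hα hβ
  have hexpand : EqOn (fun s ↦ s ^ (m + 1) * (2 * a / s * φ' s ^ 2))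
      (fun s ↦ 2 * a * (s ^ m * φ' s ^ 2)) (Ioi 0) := fun s (hs : 0 < s) ↦ by
    simp only [Real.rpow_add_one hs.ne']
    field_simp
  have hbounds : HasPowerBounds (fun s ↦ φ s ^ 2 - φ' s ^ 2) (2 * (α + 1)) (2 * β) :=
    (hφ.sq.mono_left (by linarith)).sub hφ'.sq
  have hparts := hbounds.integral_rpow_mul_deriv (fun _ ↦ h.hasDerivAt_sq_sub_deriv_sq)
    (IntegrableOn.congr_fun (hint_deriv.const_mul (2 * a)) hexpand.symm measurableSet_Ioi)
    (by linarith) hβ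
  simp only [setIntegral_congr_fun measurableSet_Ioi hexpand, integral_const_mul,
    add_sub_cancel_right, mul_sub, integral_sub hint_sq hint_deriv] at hparts
  linear_combination hparts

end IsBesselSolution

theorem stmt_5_general {a ν α β : ℝ} {φ φ' : ℝ → ℝ} (h : IsBesselSolution a φ φ')
    (hφ : HasPowerBounds φ α β) (hφ' : HasPowerBounds φ' (α + 1) β)
    (hα : 5 - a + 2 * α < ν) (hβ : ν - 3 + a < 2 * β) (hν : ν ≠ 3) :
    ∫ s in Ioi 0, s ^ (ν - 4 + a) * φ s ^ 2 =
      (ν - 4) * (ν - 5 + a) * (ν - 3 - a) / (4 * (ν - 3)) *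
        ∫ s in Ioi 0, s ^ (ν - 6 + a) * φ s ^ 2 := by
  have h_sq := h.integral_rpow_mul_mul_deriv (m := ν - 5 + a) hφ hφ' (by linarith) (by linarith)
  have h_mul := h.integral_rpow_mul_sq_add_integral_rpow_mul_deriv_sq (m := ν - 4 + a) hφ hφ'
    (by linarith) (by linarith)
  have h_pohozaev := h.pohozaev_identity (m := ν - 4 + a) hφ hφ' (by linarith) (by linarith)
  rw [show ν - 5 + a - 1 = ν - 6 + a by ring] at h_sq
  rw [show ν - 4 + a - 1 = ν - 5 + a by ring] at h_mul
  rw [div_mul_eq_mul_div, eq_div_iff (mul_ne_zero four_ne_zero (sub_ne_zero.2 hν))]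
  linear_combination 2 * h_pohozaev + 2 * (ν - 3 - a) * h_mul - (ν - 3 - a) * (ν - 4) * h_sq

end

open MeasureTheory Real in
theorem stmt_5 (γ a : ℝ) (hγ : γ ∈ Set.Ioo (0:ℝ) 1) (ha : a = 1 - 2*γ)
    (φ : ℝ → ℝ) (hφ : ContDiffOn ℝ 2 φ (Set.Ioi 0))
    (hode : ∀ s : ℝ, 0 < s → deriv (deriv φ) s + (a / s) * deriv φ s - φ s = 0)
    (hbdd : ∃ C : ℝ, ∀ s ∈ Set.Ioc (0:ℝ) 1, |φ s| ≤ C)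
    (hbdd' : ∃ C : ℝ, ∀ s ∈ Set.Ioc (0:ℝ) 1, |s ^ a * deriv φ s| ≤ C)
    (hdecay : ∃ C δ : ℝ, 0 < C ∧ 0 < δ ∧
      ∀ s : ℝ, 1 ≤ s → |φ s| + |deriv φ s| ≤ C * Real.exp (-δ * s))
    (n : ℤ) (hn : 4 + 2*γ < (n:ℝ)) :
    ∫ s in Set.Ioi (0:ℝ), s ^ ((n:ℝ)-4+a) * (φ s)^2 =
      (((n:ℝ)-4)*((n:ℝ)-5+a)*((n:ℝ)-3-a)/(4*((n:ℝ)-3))) *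
        ∫ s in Set.Ioi (0:ℝ), s ^ ((n:ℝ)-6+a) * (φ s)^2 := by
  obtain ⟨hγ_pos, hγ_lt⟩ := hγ
  obtain ⟨C₀, hC₀⟩ := hbdd
  obtain ⟨C₁, hC₁⟩ := hbdd'
  obtain ⟨C, δ, -, hδ, hC⟩ := hdecay
  have hφ_bounds : HasPowerBounds φ 0 n :=
    .of_bounded_of_exp_decay hδ (by simpa only [rpow_zero, one_mul] using hC₀)
      (fun s hs ↦ (le_add_of_nonneg_right (abs_nonneg _)).trans (hC s hs)) n
  have hφ'_bounds : HasPowerBounds (deriv φ) a n :=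
    .of_bounded_of_exp_decay hδ hC₁
      (fun s hs ↦ (le_add_of_nonneg_left (abs_nonneg _)).trans (hC s hs)) n
  -- Since `a ≤ 1`, boundedness of `s ^ a * φ'` near `0` gives the scaling bound `φ' = O(1 / s)`.
  exact stmt_5_general (.of_contDiffOn hφ hode) hφ_bounds (hφ'_bounds.mono_left (by linarith))
    (by linarith) (by linarith) (by linarith)
end

section
/- Under the stated hypotheses on φ, the identity ∫₀^∞ s^{a+4}·φ'(s)² ds = ((5+a)/(5−a))·∫₀^∞ s^{a+4}·φ(s)² ds holds. -/
/-!
Since `φ'' = φ - (a / s) φ'`, the energy `E = φ' ^ 2 - φ ^ 2` satisfies `s E' = -2 a φ' ^ 2`.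
Integrating `(s ^ (p + 1) E)' = (p + 1) s ^ p E + s ^ (p + 1) E'` over the half-line, with boundary
terms that vanish, therefore gives
`(p + 1) ∫ s ^ p (φ' ^ 2 - φ ^ 2) = 2 a ∫ s ^ p φ' ^ 2`, which is the identity when `p = a + 4`.
-/

section

open Asymptotics Filter MeasureTheory Set Topology

variable {l : Filter ℝ} {f f' φ : ℝ → ℝ} {a b c d p r δ C t : ℝ}

lemma isBigO_rpow_neg_nhdsGT_zero_of_abs_rpow_mul_le
    (hf : ∀ s ∈ Ioc (0 : ℝ) 1, |s ^ c * f s| ≤ C) (hcb : c ≤ b) :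
    f =O[𝓝[>] 0] (· ^ (-b)) := by
  refine .of_bound C ?_
  filter_upwards [Ioc_mem_nhdsGT zero_lt_one] with s hs
  calc ‖f s‖ = s ^ (-c) * |s ^ c * f s| := by
        rw [abs_mul, Real.abs_rpow_of_nonneg hs.1.le, abs_of_pos hs.1, ← mul_assoc,
          ← Real.rpow_add hs.1, neg_add_cancel, Real.rpow_zero, one_mul, Real.norm_eq_abs]
    _ ≤ s ^ (-b) * C :=
        mul_le_mul (Real.rpow_le_rpow_of_exponent_ge hs.1 hs.2 (neg_le_neg hcb)) (hf s hs)
          (abs_nonneg _) (Real.rpow_nonneg hs.1.le _)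
    _ = C * ‖s ^ (-b)‖ := by
        rw [Real.norm_of_nonneg (Real.rpow_nonneg hs.1.le _), mul_comm]

lemma isBigO_rpow_atTop_of_abs_le_exp (hδ : 0 < δ)
    (hf : ∀ s, 1 ≤ s → |f s| ≤ C * Real.exp (-δ * s)) (r : ℝ) :
    f =O[atTop] (· ^ r) := by
  have hexp : f =O[atTop] fun s ↦ Real.exp (-δ * s) := by
    refine .of_bound C ?_
    filter_upwards [eventually_ge_atTop 1] with s hs
    simpa only [Real.norm_eq_abs, Real.abs_exp] using hf s hs
  exact hexp.trans (isLittleO_exp_neg_mul_rpow_atTop hδ r).isBigO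

lemma isBigO_sq_of_isBigO_rpow_neg (hl : ∀ᶠ s in l, 0 < s) (hf : f =O[l] (· ^ (-b))) :
    (fun s ↦ f s ^ 2) =O[l] (· ^ (-(2 * b))) := by
  refine (hf.pow 2).congr' .rfl ?_
  filter_upwards [hl] with s hs
  rw [← Real.rpow_mul_natCast hs.le, Nat.cast_two, neg_mul, mul_comm b]

lemma tendsto_rpow_mul_of_isBigO_rpow (hl : ∀ᶠ s in l, 0 < s) (hf : f =O[l] (· ^ r))
    (h : Tendsto (fun s : ℝ ↦ s ^ (p + r)) l (𝓝 0)) :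
    Tendsto (fun s ↦ s ^ p * f s) l (𝓝 0) := by
  refine (((isBigO_refl (fun s : ℝ ↦ s ^ p) l).mul hf).congr' .rfl ?_).trans_tendsto h
  filter_upwards [hl] with s hs
  rw [Real.rpow_add hs]

lemma tendsto_rpow_nhdsGT_zero (hr : 0 < r) :
    Tendsto (fun s : ℝ ↦ s ^ r) (𝓝[>] 0) (𝓝 0) :=
  tendsto_nhdsWithin_of_tendsto_nhds <| by
    simpa only [Real.zero_rpow hr.ne'] using (Real.continuous_rpow_const hr.le).tendsto 0

lemma integrableOn_rpow_mul_of_isBigO (hf : ContinuousOn f (Ioi 0))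
    (hf_zero : f =O[𝓝[>] 0] (· ^ (-b))) (hb : b < p + 1)
    (hf_top : f =O[atTop] (· ^ (-d))) (hd : p + 1 < d) :
    IntegrableOn (fun s ↦ s ^ p * f s) (Ioi 0) := by
  simpa only [add_sub_cancel_right] using mellin_convergent_of_isBigO_scalar
    (hf.locallyIntegrableOn measurableSet_Ioi) hf_top hd hf_zero hb

lemma mul_integral_rpow_mul_eq_neg_integral_rpow_mul_deriv
    (hf : ∀ s, 0 < s → HasDerivAt f (f' s) s)
    (hf_zero : f =O[𝓝[>] 0] (· ^ (-b))) (hb : b < p + 1)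
    (hf_top : f =O[atTop] (· ^ (-d))) (hd : p + 1 < d)
    (hf' : IntegrableOn (fun s ↦ s ^ (p + 1) * f' s) (Ioi 0)) :
    (p + 1) * ∫ s in Ioi (0 : ℝ), s ^ p * f s = -∫ s in Ioi (0 : ℝ), s ^ (p + 1) * f' s := by
  have hpow : ∀ s ∈ Ioi (0 : ℝ), HasDerivAt (· ^ (p + 1)) ((p + 1) * s ^ p) s := fun s hs ↦ by
    simpa only [add_sub_cancel_right] using
      Real.hasDerivAt_rpow_const (p := p + 1) (Or.inl (ne_of_gt hs))
  have hint : IntegrableOn (fun s ↦ (p + 1) * s ^ p * f s) (Ioi 0) := by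
    simpa only [mul_assoc, IntegrableOn] using (integrableOn_rpow_mul_of_isBigO
      (fun s hs ↦ (hf s hs).continuousAt.continuousWithinAt) hf_zero hb hf_top hd).const_mul (p + 1)
  have hzero : Tendsto (fun s ↦ s ^ (p + 1) * f s) (𝓝[>] 0) (𝓝 0) :=
    tendsto_rpow_mul_of_isBigO_rpow self_mem_nhdsWithin hf_zero
      (tendsto_rpow_nhdsGT_zero (by linarith))
  have htop : Tendsto (fun s ↦ s ^ (p + 1) * f s) atTop (𝓝 0) :=
    tendsto_rpow_mul_of_isBigO_rpow (eventually_gt_atTop 0) hf_top <| by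
      simpa only [neg_sub, ← sub_eq_add_neg] using tendsto_rpow_neg_atTop (sub_pos.2 hd)
  have hparts := integral_Ioi_mul_deriv_eq_deriv_mul hpow hf hf' hint hzero htop
  simp only [sub_zero, zero_sub, mul_assoc, integral_const_mul] at hparts
  rw [hparts, neg_neg]

lemma hasDerivAt_sq_deriv_sub_sq (hφ : DifferentiableAt ℝ φ t)
    (hφ' : DifferentiableAt ℝ (deriv φ) t)
    (hode : deriv (deriv φ) t + a / t * deriv φ t - φ t = 0) :
    HasDerivAt (fun s ↦ deriv φ s ^ 2 - φ s ^ 2) (-(2 * a) * (deriv φ t ^ 2 / t)) t := by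
  refine ((hφ'.hasDerivAt.fun_pow 2).sub (hφ.hasDerivAt.fun_pow 2)).congr_deriv ?_
  linear_combination 2 * deriv φ t * hode

theorem stmt_6_general
    (hφ : DifferentiableOn ℝ φ (Ioi 0)) (hφ' : DifferentiableOn ℝ (deriv φ) (Ioi 0))
    (hode : ∀ s, 0 < s → deriv (deriv φ) s + a / s * deriv φ s - φ s = 0)
    (hφ_zero : φ =O[𝓝[>] 0] (· ^ (-b))) (hφ'_zero : deriv φ =O[𝓝[>] 0] (· ^ (-b)))
    (hb : 2 * b < p + 1)
    (hφ_top : φ =O[atTop] (· ^ (-d))) (hφ'_top : deriv φ =O[atTop] (· ^ (-d)))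
    (hd : p + 1 < 2 * d) :
    (p + 1 - 2 * a) * ∫ s in Ioi (0 : ℝ), s ^ p * deriv φ s ^ 2 =
      (p + 1) * ∫ s in Ioi (0 : ℝ), s ^ p * φ s ^ 2 := by
  have sq_zero := isBigO_sq_of_isBigO_rpow_neg self_mem_nhdsWithin hφ_zero
  have sq_zero' := isBigO_sq_of_isBigO_rpow_neg self_mem_nhdsWithin hφ'_zero
  have sq_top := isBigO_sq_of_isBigO_rpow_neg (eventually_gt_atTop 0) hφ_top
  have sq_top' := isBigO_sq_of_isBigO_rpow_neg (eventually_gt_atTop 0) hφ'_top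
  have hint : IntegrableOn (fun s ↦ s ^ p * φ s ^ 2) (Ioi 0) :=
    integrableOn_rpow_mul_of_isBigO (hφ.continuousOn.pow 2) sq_zero hb sq_top hd
  have hint' : IntegrableOn (fun s ↦ s ^ p * deriv φ s ^ 2) (Ioi 0) :=
    integrableOn_rpow_mul_of_isBigO (hφ'.continuousOn.pow 2) sq_zero' hb sq_top' hd
  have weight_eq : EqOn (fun s ↦ s ^ (p + 1) * (-(2 * a) * (deriv φ s ^ 2 / s)))
      (fun s ↦ -(2 * a) * (s ^ p * deriv φ s ^ 2)) (Ioi 0) := fun s (hs : 0 < s) ↦ by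
    simp only [Real.rpow_add_one hs.ne']
    field
  have hparts := mul_integral_rpow_mul_eq_neg_integral_rpow_mul_deriv
    (fun s hs ↦ hasDerivAt_sq_deriv_sub_sq (hφ.differentiableAt (Ioi_mem_nhds hs))
      (hφ'.differentiableAt (Ioi_mem_nhds hs)) (hode s hs))
    (sq_zero'.sub sq_zero) hb (sq_top'.sub sq_top) hd
    ((integrableOn_congr_fun weight_eq measurableSet_Ioi).2 (hint'.const_mul _))
  simp only [setIntegral_congr_fun measurableSet_Ioi weight_eq, integral_const_mul, mul_sub,
    integral_sub hint' hint] at hparts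
  linear_combination hparts

end

open MeasureTheory Real in
theorem stmt_6 (γ a : ℝ) (hγ : γ ∈ Set.Ioo (0:ℝ) 1) (ha : a = 1 - 2*γ)
    (φ : ℝ → ℝ) (hφ : ContDiffOn ℝ 2 φ (Set.Ioi 0))
    (hode : ∀ s : ℝ, 0 < s → deriv (deriv φ) s + (a / s) * deriv φ s - φ s = 0)
    (hbdd : ∃ C : ℝ, ∀ s ∈ Set.Ioc (0:ℝ) 1, |φ s| ≤ C)
    (hbdd' : ∃ C : ℝ, ∀ s ∈ Set.Ioc (0:ℝ) 1, |s ^ a * deriv φ s| ≤ C)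
    (hdecay : ∃ C δ : ℝ, 0 < C ∧ 0 < δ ∧
      ∀ s : ℝ, 1 ≤ s → |φ s| + |deriv φ s| ≤ C * Real.exp (-δ * s)) :
    ∫ s in Set.Ioi (0:ℝ), s ^ (a+4) * (deriv φ s)^2 =
      ((5+a)/(5-a)) * ∫ s in Set.Ioi (0:ℝ), s ^ (a+4) * (φ s)^2 := by
  obtain ⟨hγ0, hγ1⟩ := hγ
  obtain ⟨A, hA⟩ := hbdd
  obtain ⟨B, hB⟩ := hbdd'
  obtain ⟨C, δ, -, hδ, hdecay⟩ := hdecay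
  have hφ' : DifferentiableOn ℝ (deriv φ) (Set.Ioi 0) :=
    (hφ.deriv_of_isOpen isOpen_Ioi one_add_one_eq_two.le).differentiableOn one_ne_zero
  have hφ_zero := isBigO_rpow_neg_nhdsGT_zero_of_abs_rpow_mul_le (f := φ) (c := 0) (b := 1)
    (by simpa only [rpow_zero, one_mul] using hA) zero_le_one
  have hφ'_zero := isBigO_rpow_neg_nhdsGT_zero_of_abs_rpow_mul_le (b := 1) hB (by linarith)
  have hφ_top := isBigO_rpow_atTop_of_abs_le_exp hδ
    (fun s hs ↦ (le_add_of_nonneg_right (abs_nonneg _)).trans (hdecay s hs)) (-5)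
  have hφ'_top := isBigO_rpow_atTop_of_abs_le_exp hδ
    (fun s hs ↦ (le_add_of_nonneg_left (abs_nonneg _)).trans (hdecay s hs)) (-5)
  rw [div_mul_eq_mul_div, eq_div_iff (by linarith)]
  linear_combination stmt_6_general (p := a + 4) (hφ.differentiableOn two_ne_zero) hφ' hode
    hφ_zero hφ'_zero (by linarith) hφ_top hφ'_top (by linarith)
end

section
/- Let γ ∈ (0,1) and let n be an integer with n > 4 + 2γ. Let ψ : (0,∞) → ℝ be twice continuously differentiable, satisfy the modified Bessel equation t²·ψ''(t) + t·ψ'(t) − (t² + γ²)·ψ(t) = 0 for all t > 0, and assume there are constants C, δ > 0 with |ψ(t)| ≤ C·t^{−γ} and |ψ'(t)| ≤ C·t^{−γ−1} for t ∈ (0,1], and |ψ(t)| + |ψ'(t)| ≤ C·e^{−δt} for t ≥ 1. Then (n−4)·∫₀^∞ t^{n−3}·ψ'(t)² dt = (n−2)·∫₀^∞ t^{n−3}·ψ(t)² dt + γ²·(n−4)·∫₀^∞ t^{n−5}·ψ(t)² dt. -/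
/-! Multiplied by `2 t ^ (m - 4) ψ'`, the modified Bessel equation gives a formula free of `ψ''` for
the derivative of the energy `t ^ (m - 2) (ψ'² - ψ²) - ν t ^ (m - 4) ψ²`. The growth bounds make the
energy vanish at `0` and at `∞`, so that derivative has integral zero, which is the identity. -/

open Asymptotics Filter MeasureTheory Real Set Topology

section PowerDecay

variable {E : Type*} [Norm E] {g : ℝ → E} {f : ℝ → ℝ} {l : Filter ℝ} {C c δ p q s : ℝ}

lemma isBigO_rpow_nhdsGT_zero_of_norm_le (hc : 0 < c)
    (hg : ∀ t ∈ Ioc 0 c, ‖g t‖ ≤ C * t ^ p) : g =O[𝓝[>] 0] (· ^ p) := by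
  refine .of_bound C ?_
  filter_upwards [Ioc_mem_nhdsGT hc] with t ht
  simpa only [norm_of_nonneg (rpow_nonneg ht.1.le p)] using hg t ht

lemma isBigO_rpow_atTop_of_norm_le_exp (hδ : 0 < δ)
    (hg : ∀ t, c ≤ t → ‖g t‖ ≤ C * exp (-δ * t)) (q : ℝ) : g =O[atTop] (· ^ q) := by
  refine .trans (.of_bound C ?_) (isLittleO_exp_neg_mul_rpow_atTop hδ q).isBigO
  filter_upwards [eventually_ge_atTop c] with t ht
  simpa only [norm_eq_abs, abs_exp] using hg t ht

lemma isBigO_sq_rpow (hf : f =O[l] (· ^ p)) (hl : ∀ᶠ t in l, 0 < t) :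
    (fun t ↦ f t ^ 2) =O[l] (· ^ (2 * p)) := by
  refine (hf.pow 2).congr' .rfl ?_
  filter_upwards [hl] with t ht
  rw [← rpow_mul_natCast ht.le, Nat.cast_ofNat, mul_comm]

lemma isBigO_rpow_mul_sq (hf : f =O[l] (· ^ p)) (hl : ∀ᶠ t in l, 0 < t) (s : ℝ) :
    (fun t ↦ t ^ s * f t ^ 2) =O[l] (· ^ (s + 2 * p)) := by
  refine ((isBigO_refl (· ^ s) l).mul (isBigO_sq_rpow hf hl)).congr' .rfl ?_
  filter_upwards [hl] with t ht
  exact (rpow_add ht _ _).symm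

lemma tendsto_rpow_mul_sq_nhdsGT_zero (hf : f =O[𝓝[>] 0] (· ^ p)) (hs : 0 < s + 2 * p) :
    Tendsto (fun t ↦ t ^ s * f t ^ 2) (𝓝[>] 0) (𝓝 0) := by
  have h_rpow : Tendsto (fun t : ℝ ↦ t ^ (s + 2 * p)) (𝓝[>] 0) (𝓝 0) := by
    simpa only [zero_rpow hs.ne'] using
      (continuousAt_rpow_const 0 _ (.inr hs.le)).tendsto.mono_left nhdsWithin_le_nhds
  exact (isBigO_rpow_mul_sq hf eventually_mem_nhdsWithin s).trans_tendsto h_rpow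

lemma tendsto_rpow_mul_sq_atTop (hf : f =O[atTop] (· ^ q)) (hs : s + 2 * q < 0) :
    Tendsto (fun t ↦ t ^ s * f t ^ 2) atTop (𝓝 0) := by
  have h_rpow : Tendsto (fun t : ℝ ↦ t ^ (s + 2 * q)) atTop (𝓝 0) := by
    simpa only [neg_neg] using tendsto_rpow_neg_atTop (neg_pos.2 hs)
  exact (isBigO_rpow_mul_sq hf (eventually_gt_atTop 0) s).trans_tendsto h_rpow

lemma integrableOn_rpow_mul_sq (hf : ContinuousOn f (Ioi 0)) (hf_zero : f =O[𝓝[>] 0] (· ^ p))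
    (hf_top : f =O[atTop] (· ^ q)) (hs_zero : -1 < s + 2 * p) (hs_top : s + 2 * q < -1) :
    IntegrableOn (fun t ↦ t ^ s * f t ^ 2) (Ioi 0) := by
  have h_zero := isBigO_sq_rpow hf_zero eventually_mem_nhdsWithin
  have h_top := isBigO_sq_rpow hf_top (eventually_gt_atTop 0)
  rw [← neg_neg (2 * p)] at h_zero
  rw [← neg_neg (2 * q)] at h_top
  have h := mellin_convergent_of_isBigO_scalar (s := s + 1)
    ((hf.pow 2).locallyIntegrableOn measurableSet_Ioi) h_top (by linarith) h_zero (by linarith)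
  simpa only [add_sub_cancel_right, Pi.pow_apply] using h

end PowerDecay

lemma integral_Ioi_of_hasDerivAt_of_tendsto_nhdsGT {E : Type*} [NormedAddCommGroup E]
    [NormedSpace ℝ E] [CompleteSpace E] {f f' : ℝ → E} {a : ℝ} {x y : E}
    (hderiv : ∀ t ∈ Ioi a, HasDerivAt f (f' t) t) (hint : IntegrableOn f' (Ioi a))
    (ha : Tendsto f (𝓝[>] a) (𝓝 x)) (htop : Tendsto f atTop (𝓝 y)) :
    ∫ t in Ioi a, f' t = y - x := by
  have h_eq : ∀ t ∈ Ioi a, f =ᶠ[𝓝 t] Function.update f a x := fun t ht ↦ by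
    filter_upwards [Ioi_mem_nhds ht] with u hu
    rw [Function.update_of_ne (ne_of_gt hu)]
  have h_cont : ContinuousWithinAt (Function.update f a x) (Ici a) a := by
    rwa [continuousWithinAt_update_same, Ici_sdiff_left]
  have h_top : Tendsto (Function.update f a x) atTop (𝓝 y) := by
    refine htop.congr' ?_
    filter_upwards [eventually_gt_atTop a] with t ht using (h_eq t ht).self_of_nhds
  simpa only [Function.update_self] using integral_Ioi_of_hasDerivAt_of_tendsto h_cont
    (fun t ht ↦ (hderiv t ht).congr_of_eventuallyEq (h_eq t ht).symm) hint h_top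

lemma hasDerivAt_rpow_mul_sq {f : ℝ → ℝ} {f' t : ℝ} (hf : HasDerivAt f f' t) (ht : t ≠ 0)
    (s : ℝ) :
    HasDerivAt (fun u ↦ u ^ s * f u ^ 2)
      (s * t ^ (s - 1) * f t ^ 2 + t ^ s * (2 * f t * f')) t := by
  simpa only [Nat.cast_ofNat, Nat.add_one_sub_one, pow_one] using
    (hasDerivAt_rpow_const (p := s) (.inl ht)).fun_mul (hf.fun_pow 2)

/-- The weighted energy `t ^ (m - 2) (ψ'² - ψ²) - ν t ^ (m - 4) ψ²` of a solution of the modified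
Bessel equation `t² ψ'' + t ψ' = (t² + ν) ψ`; here `ν` is the square of the order, so that imaginary
orders are allowed, and `m` need not be an integer. -/
noncomputable def besselEnergy (ν m : ℝ) (ψ : ℝ → ℝ) (t : ℝ) : ℝ :=
  t ^ (m - 2) * deriv ψ t ^ 2 - t ^ (m - 2) * ψ t ^ 2 - ν * (t ^ (m - 4) * ψ t ^ 2)

/-- The derivative of `besselEnergy` along solutions of the modified Bessel equation, after the
equation has been used to eliminate `ψ''`. -/
noncomputable def besselEnergyDeriv (ν m : ℝ) (ψ : ℝ → ℝ) (t : ℝ) : ℝ :=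
  (m - 4) * (t ^ (m - 3) * deriv ψ t ^ 2) - (m - 2) * (t ^ (m - 3) * ψ t ^ 2)
    - ν * (m - 4) * (t ^ (m - 5) * ψ t ^ 2)

section Bessel

variable {ν m p q : ℝ} {ψ : ℝ → ℝ}

lemma hasDerivAt_besselEnergy {t : ℝ} (ht : 0 < t) (hψ : DifferentiableAt ℝ ψ t)
    (hψ' : DifferentiableAt ℝ (deriv ψ) t)
    (hbessel : t ^ 2 * deriv (deriv ψ) t + t * deriv ψ t - (t ^ 2 + ν) * ψ t = 0) :
    HasDerivAt (besselEnergy ν m ψ) (besselEnergyDeriv ν m ψ t) t := by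
  have h_raw := ((hasDerivAt_rpow_mul_sq hψ'.hasDerivAt ht.ne' (m - 2)).sub
    (hasDerivAt_rpow_mul_sq hψ.hasDerivAt ht.ne' (m - 2))).sub
    ((hasDerivAt_rpow_mul_sq hψ.hasDerivAt ht.ne' (m - 4)).const_mul ν)
  refine h_raw.congr_deriv ?_
  have h_rpow (k : ℕ) : t ^ (m - 5 + k) = t ^ (m - 5) * t ^ k := rpow_add_natCast ht.ne' _ _
  rw [besselEnergyDeriv, show m - 2 - 1 = m - 5 + (2 : ℕ) by push_cast; ring,
    show m - 4 - 1 = m - 5 by ring, show m - 2 = m - 5 + (3 : ℕ) by push_cast; ring,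
    show m - 3 = m - 5 + (2 : ℕ) by push_cast; ring,
    show m - 4 = m - 5 + (1 : ℕ) by push_cast; ring, h_rpow, h_rpow, h_rpow]
  push_cast
  linear_combination 2 * t ^ (m - 5) * t * deriv ψ t * hbessel

lemma tendsto_besselEnergy_nhdsGT_zero (hψ : ψ =O[𝓝[>] 0] (· ^ p))
    (hψ' : deriv ψ =O[𝓝[>] 0] (· ^ (p - 1))) (hm : 4 < m + 2 * p) :
    Tendsto (besselEnergy ν m ψ) (𝓝[>] 0) (𝓝 0) := by
  have h_lim := ((tendsto_rpow_mul_sq_nhdsGT_zero (s := m - 2) hψ' (by linarith)).sub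
    (tendsto_rpow_mul_sq_nhdsGT_zero (s := m - 2) hψ (by linarith))).sub
    ((tendsto_rpow_mul_sq_nhdsGT_zero (s := m - 4) hψ (by linarith)).const_mul ν)
  rw [mul_zero, sub_zero, sub_zero] at h_lim
  exact h_lim

lemma tendsto_besselEnergy_atTop (hψ : ψ =O[atTop] (· ^ q)) (hψ' : deriv ψ =O[atTop] (· ^ q))
    (hm : m + 2 * q < 2) : Tendsto (besselEnergy ν m ψ) atTop (𝓝 0) := by
  have h_lim := ((tendsto_rpow_mul_sq_atTop (s := m - 2) hψ' (by linarith)).sub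
    (tendsto_rpow_mul_sq_atTop (s := m - 2) hψ (by linarith))).sub
    ((tendsto_rpow_mul_sq_atTop (s := m - 4) hψ (by linarith)).const_mul ν)
  rw [mul_zero, sub_zero, sub_zero] at h_lim
  exact h_lim

theorem stmt_7_general (hψ : ContDiffOn ℝ 2 ψ (Ioi 0))
    (hbessel : ∀ t, 0 < t →
      t ^ 2 * deriv (deriv ψ) t + t * deriv ψ t - (t ^ 2 + ν) * ψ t = 0)
    (hψ_zero : ψ =O[𝓝[>] 0] (· ^ p)) (hψ'_zero : deriv ψ =O[𝓝[>] 0] (· ^ (p - 1)))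
    (hψ_top : ψ =O[atTop] (· ^ q)) (hψ'_top : deriv ψ =O[atTop] (· ^ q))
    (hm_zero : 4 < m + 2 * p) (hm_top : m + 2 * q < 2) :
    (m - 4) * ∫ t in Ioi (0 : ℝ), t ^ (m - 3) * deriv ψ t ^ 2 =
      (m - 2) * (∫ t in Ioi (0 : ℝ), t ^ (m - 3) * ψ t ^ 2)
        + ν * (m - 4) * ∫ t in Ioi (0 : ℝ), t ^ (m - 5) * ψ t ^ 2 := by
  have hψ' : ContDiffOn ℝ 1 (deriv ψ) (Ioi 0) := hψ.deriv_of_isOpen isOpen_Ioi (by norm_num)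
  have h_deriv : ∀ t ∈ Ioi (0 : ℝ),
      HasDerivAt (besselEnergy ν m ψ) (besselEnergyDeriv ν m ψ t) t := fun t ht ↦
    hasDerivAt_besselEnergy ht
      ((hψ.differentiableOn two_ne_zero).differentiableAt (Ioi_mem_nhds ht))
      ((hψ'.differentiableOn one_ne_zero).differentiableAt (Ioi_mem_nhds ht)) (hbessel t ht)
  have h_int₁ := (integrableOn_rpow_mul_sq (s := m - 3) hψ'.continuousOn hψ'_zero hψ'_top
    (by linarith) (by linarith)).const_mul (m - 4)
  have h_int₂ := (integrableOn_rpow_mul_sq (s := m - 3) hψ.continuousOn hψ_zero hψ_top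
    (by linarith) (by linarith)).const_mul (m - 2)
  have h_int₃ := (integrableOn_rpow_mul_sq (s := m - 5) hψ.continuousOn hψ_zero hψ_top
    (by linarith) (by linarith)).const_mul (ν * (m - 4))
  have h_zero : ∫ t in Ioi (0 : ℝ), besselEnergyDeriv ν m ψ t = 0 - 0 :=
    integral_Ioi_of_hasDerivAt_of_tendsto_nhdsGT h_deriv ((h_int₁.sub h_int₂).sub h_int₃)
      (tendsto_besselEnergy_nhdsGT_zero hψ_zero hψ'_zero hm_zero)
      (tendsto_besselEnergy_atTop hψ_top hψ'_top hm_top)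
  simp only [besselEnergyDeriv] at h_zero
  rw [integral_sub (by exact h_int₁.sub h_int₂) h_int₃, integral_sub h_int₁ h_int₂,
    integral_const_mul, integral_const_mul, integral_const_mul] at h_zero
  linarith

end Bessel

open MeasureTheory Real in
theorem stmt_7 (γ : ℝ) (hγ : γ ∈ Set.Ioo (0:ℝ) 1) (n : ℤ) (hn : 4 + 2*γ < (n:ℝ))
    (ψ : ℝ → ℝ) (hψ : ContDiffOn ℝ 2 ψ (Set.Ioi 0))
    (hbessel : ∀ t : ℝ, 0 < t →
      t^2 * deriv (deriv ψ) t + t * deriv ψ t - (t^2 + γ^2) * ψ t = 0)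
    (hdecay : ∃ C δ : ℝ, 0 < C ∧ 0 < δ ∧
      (∀ t ∈ Set.Ioc (0:ℝ) 1, |ψ t| ≤ C * t ^ (-γ) ∧ |deriv ψ t| ≤ C * t ^ (-γ-1)) ∧
      (∀ t : ℝ, 1 ≤ t → |ψ t| + |deriv ψ t| ≤ C * Real.exp (-δ * t))) :
    ((n:ℝ)-4) * ∫ t in Set.Ioi (0:ℝ), t ^ ((n:ℝ)-3) * (deriv ψ t)^2 =
      ((n:ℝ)-2) * (∫ t in Set.Ioi (0:ℝ), t ^ ((n:ℝ)-3) * (ψ t)^2)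
        + γ^2 * ((n:ℝ)-4) * ∫ t in Set.Ioi (0:ℝ), t ^ ((n:ℝ)-5) * (ψ t)^2 := by
  obtain ⟨C, δ, -, hδ, h_zero, h_top⟩ := hdecay
  exact stmt_7_general (q := -n) hψ hbessel
    (isBigO_rpow_nhdsGT_zero_of_norm_le one_pos fun t ht ↦ (h_zero t ht).1)
    (isBigO_rpow_nhdsGT_zero_of_norm_le one_pos fun t ht ↦ (h_zero t ht).2)
    (isBigO_rpow_atTop_of_norm_le_exp hδ
      (fun t ht ↦ (le_add_of_nonneg_right (abs_nonneg _)).trans (h_top t ht)) _)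
    (isBigO_rpow_atTop_of_norm_le_exp hδ
      (fun t ht ↦ (le_add_of_nonneg_left (abs_nonneg _)).trans (h_top t ht)) _)
    (by linarith) (by linarith [hγ.1])
end
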